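/- Let k ≥ 1 and let C_1,…,C_{n_c} be binary linear codes, where C_h has length n_h, a k×n_h generator matrix of rank k, and minimum distance d^{(h)}_min ≥ 2; let P_1,…,P_{n_c} be nonnegative reals summing to 1, let Ā_2 := Σ_h P_h A^{(h)}_2 where A^{(h)}_2 is the number of weight-2 codewords of C_h, and let f(x,G) := 1 − exp( −(G/k) Σ_h P_h Σ_{t=0}^{n_h−1} a^{(h)}_t x^t (1−x)^{n_h−1−t} ) with a^{(h)}_t := (n_h−t)·ẽ^{(h)}_{n_h−t} − (t+1)·ẽ^{(h)}_{n_h−1−t}. Then x = 0 is a fixed point of x ↦ f(x,G), and: (i) if Ā_2 > 0 and 0 < G < k/(2Ā_2), then 0 is locally stable, i.e., there exists ε > 0 such that all iterates of x ↦ f(x,G) started at any x_0 with |x_0| < ε converge to 0; (ii) if Ā_2 > 0 and G > k/(2Ā_2), then 0 is not stable, i.e., there exists ε > 0 such that for every δ > 0 some starting point x_0 with 0 < |x_0| < δ has an iterate whose absolute value is at least ε; (iii) if Ā_2 = 0 (equivalently, every d^{(h)}_min ≥ 3), then 0 is locally stable for every G > 0. -/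

import Mathlib

/-! The theorem is the linearised stability criterion for the fixed point `0` of the scalar map
`x ↦ f x G`, whose derivative at `0` turns out to be `2 * G * A2bar / k`.

The derivative only sees the coefficients `a h 0` and `a h 1`. They are computed from the
information functions of order `n`, `n - 1` and `n - 2`: by rank-nullity, the rank of the columns
indexed by `S` is `k` minus the dimension of the space of codewords vanishing on `S`. As the minimum
distance is at least two, this space is zero when `S` omits at most one column; when `S`
omits two columns it is nonzero precisely when the indicator vector of the omitted pair is a
codeword, and then it is a line. Hence `ẽ_n = k`, `ẽ_{n-1} = n k` and
`ẽ_{n-2} = (n choose 2) k - A_2`, so that `a h 0 = 0` and `a h 1 = 2 A_2`.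

If the derivative `c` has `|c| < 1` the map contracts towards `0` near `0`
(`stable_of_hasDerivAt`); if `1 < c` it expands away from `0` near `0`
(`unstable_of_hasDerivAt`). -/

open Filter

attribute [local instance] Classical.propDecidable

/-- Rank of the submatrix of `G` formed by the columns indexed by `S`. -/
noncomputable def colRank {k n : ℕ} (G : Matrix (Fin k) (Fin n) (ZMod 2))
    (S : Finset (Fin n)) : ℕ :=
  (G.submatrix id (Subtype.val : {x // x ∈ S} → Fin n)).rank

/-- The `g`-th un-normalized information function of `G`. -/
noncomputable def infoFun {k n : ℕ} (G : Matrix (Fin k) (Fin n) (ZMod 2)) (g : ℕ) : ℕ :=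
  ∑ S ∈ Finset.univ.filter (fun S : Finset (Fin n) => S.card = g), colRank G S

/-- Hamming weight of a binary vector. -/
def wt {n : ℕ} (c : Fin n → ZMod 2) : ℕ :=
  (Finset.univ.filter (fun i => c i ≠ 0)).card

/-! ### One-dimensional dynamics near a fixed point -/

theorem stable_of_hasDerivAt (F : ℝ → ℝ) (c : ℝ) (h0 : F 0 = 0) (hF : HasDerivAt F c 0)
    (hc : |c| < 1) :
    ∃ ε > 0, ∀ x₀ : ℝ, |x₀| < ε → Tendsto (fun l : ℕ => F^[l] x₀) atTop (nhds 0) := by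
  obtain ⟨r, hr1, hr2⟩ := exists_between hc
  have hr0 : 0 ≤ r := (abs_nonneg c).trans hr1.le
  have h1 := (hasDerivAt_iff_isLittleO.1 hF).def (sub_pos.2 hr1)
  obtain ⟨ε, hε, h2⟩ := Metric.eventually_nhds_iff.1 h1
  have h3 : ∀ x : ℝ, |x| < ε → |F x| ≤ r * |x| := by
    intro x hx
    have h4 := h2 (y := x) (by simpa [Real.dist_eq] using hx)
    simp only [h0, sub_zero, smul_eq_mul, Real.norm_eq_abs] at h4
    have h5 := abs_add_le (F x - x * c) (x * c)
    rw [sub_add_cancel, abs_mul x c] at h5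
    linarith
  refine ⟨ε, hε, fun x₀ hx₀ => ?_⟩
  have h6 : ∀ l : ℕ, |F^[l] x₀| ≤ r ^ l * |x₀| := by
    intro l
    induction l with
    | zero => simp
    | succ l ih =>
      rw [Function.iterate_succ_apply']
      have h7 : r ^ l * |x₀| ≤ |x₀| :=
        mul_le_of_le_one_left (abs_nonneg _) (pow_le_one₀ hr0 hr2.le)
      calc _ ≤ r * |F^[l] x₀| := h3 _ (by linarith)
        _ ≤ r * (r ^ l * |x₀|) := by gcongr
        _ = _ := by ring
  refine squeeze_zero_norm h6 ?_
  simpa using (tendsto_pow_atTop_nhds_zero_of_lt_one hr0 hr2).mul_const |x₀|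

theorem unstable_of_hasDerivAt (F : ℝ → ℝ) (c : ℝ) (h0 : F 0 = 0) (hF : HasDerivAt F c 0)
    (hc : 1 < c) :
    ∃ ε > 0, ∀ δ > 0, ∃ x₀ : ℝ, 0 < |x₀| ∧ |x₀| < δ ∧ ∃ l : ℕ, ε ≤ |F^[l] x₀| := by
  obtain ⟨r, hr1, hr2⟩ := exists_between hc
  have h1 := (hasDerivAt_iff_isLittleO.1 hF).def (sub_pos.2 hr2)
  obtain ⟨ε, hε, h2⟩ := Metric.eventually_nhds_iff.1 h1
  have h3 : ∀ x : ℝ, |x| < ε → r * |x| ≤ |F x| := by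
    intro x hx
    have h4 := h2 (y := x) (by simpa [Real.dist_eq] using hx)
    simp only [h0, sub_zero, smul_eq_mul, Real.norm_eq_abs] at h4
    have h5 := abs_sub_abs_le_abs_sub (x * c) (F x)
    rw [abs_sub_comm, abs_mul x c, abs_of_pos (by linarith : 0 < c)] at h5
    linarith
  refine ⟨ε, hε, fun δ hδ => ⟨δ / 2, ?_, ?_, ?_⟩⟩
  · rw [abs_of_pos] <;> linarith
  · rw [abs_of_pos] <;> linarith
  by_contra! hcon
  have h6 : ∀ l : ℕ, r ^ l * |δ / 2| ≤ |F^[l] (δ / 2)| := by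
    intro l
    induction l with
    | zero => simp
    | succ l ih =>
      rw [Function.iterate_succ_apply']
      calc _ = r * (r ^ l * |δ / 2|) := by ring
        _ ≤ r * |F^[l] (δ / 2)| := by gcongr
        _ ≤ _ := h3 _ (hcon l)
  have hpos : 0 < |δ / 2| := by positivity
  obtain ⟨l, hl⟩ := pow_unbounded_of_one_lt (ε / |δ / 2|) hr1
  rw [div_lt_iff₀ hpos] at hl
  linarith [h6 l, hcon l]

/-- Only the coefficient of the term `t = 1` contributes to the derivative at `0` when the
coefficient of the term `t = 0` vanishes. -/
theorem hasDerivAt_bernstein (a : ℕ → ℝ) (n : ℕ) (hn : 2 ≤ n) (ha : a 0 = 0) :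
    HasDerivAt (fun x : ℝ => ∑ t ∈ Finset.range n, a t * x ^ t * (1 - x) ^ (n - 1 - t))
      (a 1) 0 := by
  have h1 : ∀ t ∈ Finset.range n,
      HasDerivAt (fun x : ℝ => a t * x ^ t * (1 - x) ^ (n - 1 - t))
        (if t = 1 then a 1 else 0) 0 := by
    intro t _
    have h2 := ((hasDerivAt_pow t (0 : ℝ)).const_mul (a t)).mul
      (((hasDerivAt_id (0 : ℝ)).const_sub 1).pow (n - 1 - t))
    refine (h2.congr_deriv ?_)
    rcases t with _ | _ | t
    · simp [ha]
    · simp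
    · simp
  refine (HasDerivAt.fun_sum h1).congr_deriv ?_
  rw [Finset.sum_ite_eq' (Finset.range n) 1 (fun _ => a 1), if_pos (by simp; omega)]

/-! ### Information functions of order `n`, `n - 1` and `n - 2` -/

theorem vecMul_injective {k n : ℕ} (G : Matrix (Fin k) (Fin n) (ZMod 2)) (h : G.rank = k) :
    Function.Injective G.vecMulLinear := by
  rw [← LinearMap.ker_eq_bot, ← Submodule.finrank_eq_zero]
  have h1 := LinearMap.finrank_range_add_finrank_ker G.vecMulLinear
  have h2 : Module.finrank (ZMod 2) (LinearMap.range G.vecMulLinear) = k := by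
    refine Eq.trans ?_ h
    rw [← Matrix.rank_transpose G, Matrix.rank, Matrix.mulVecLin_transpose]
  simp only [Module.finrank_fin_fun] at h1
  omega

/-- Rank-nullity for a set of columns. -/
theorem colRank_add {k n : ℕ} (G : Matrix (Fin k) (Fin n) (ZMod 2)) (S : Finset (Fin n)) :
    colRank G S + Module.finrank (ZMod 2) (LinearMap.ker
      (G.submatrix id (Subtype.val : {x // x ∈ S} → Fin n)).vecMulLinear) = k := by
  have h1 := LinearMap.finrank_range_add_finrank_ker
    (G.submatrix id (Subtype.val : {x // x ∈ S} → Fin n)).vecMulLinear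
  simp only [Module.finrank_fin_fun] at h1
  rw [colRank, ← Matrix.rank_transpose, Matrix.rank, Matrix.mulVecLin_transpose]
  exact h1

theorem mem_ker_iff {k n : ℕ} (G : Matrix (Fin k) (Fin n) (ZMod 2)) (S : Finset (Fin n))
    (u : Fin k → ZMod 2) :
    u ∈ LinearMap.ker (G.submatrix id (Subtype.val : {x // x ∈ S} → Fin n)).vecMulLinear ↔
      ∀ i ∈ S, G.vecMulLinear u i = 0 := by
  rw [LinearMap.mem_ker, funext_iff]
  constructor
  · intro h i hi
    exact h ⟨i, hi⟩
  · intro h i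
    exact h i.1 i.2

/-- The indicator vector of the complement of `S`. -/
noncomputable def coInd {n : ℕ} (S : Finset (Fin n)) : Fin n → ZMod 2 :=
  fun i => if i ∈ S then 0 else 1

theorem zmod2_eq_one {x : ZMod 2} (h : x ≠ 0) : x = 1 := by
  revert h; revert x; decide

theorem wt_add_card_le {n : ℕ} (c : Fin n → ZMod 2) (S : Finset (Fin n))
    (h : ∀ i ∈ S, c i = 0) : wt c + S.card ≤ n := by
  have hd : Disjoint (Finset.univ.filter (fun i => c i ≠ 0)) S := by
    rw [Finset.disjoint_left]
    intro i hi hS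
    exact (Finset.mem_filter.1 hi).2 (h i hS)
  have := Finset.card_le_univ (Finset.disjUnion _ _ hd)
  rw [Finset.card_disjUnion, Fintype.card_fin] at this
  unfold wt
  convert this

theorem eq_coInd {n : ℕ} (c : Fin n → ZMod 2) (S : Finset (Fin n))
    (h : ∀ i ∈ S, c i = 0) (h2 : n ≤ wt c + S.card) : c = coInd S := by
  have hd : Disjoint (Finset.univ.filter (fun i => c i ≠ 0)) S := by
    rw [Finset.disjoint_left]
    intro i hi hS
    exact (Finset.mem_filter.1 hi).2 (h i hS)
  have hu : Finset.disjUnion _ _ hd = Finset.univ := by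
    rw [← Finset.card_eq_iff_eq_univ, Fintype.card_fin]
    refine le_antisymm ((Finset.card_le_univ _).trans (by simp)) ?_
    rw [Finset.card_disjUnion]
    unfold wt at h2
    convert h2
  funext i
  unfold coInd
  split_ifs with hi
  · exact h i hi
  · have := Finset.mem_univ i
    rw [← hu, Finset.mem_disjUnion] at this
    rcases this with h' | h'
    · exact zmod2_eq_one (Finset.mem_filter.1 h').2
    · exact absurd h' hi

theorem wt_coInd {n : ℕ} (S : Finset (Fin n)) : wt (coInd S) = n - S.card := by
  have h := Finset.card_compl S
  rw [Fintype.card_fin] at h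
  rw [← h]
  unfold wt
  congr 1
  ext i
  by_cases hi : i ∈ S <;> simp [coInd, hi]

theorem colRank_eq_of_lt {k n : ℕ} (G : Matrix (Fin k) (Fin n) (ZMod 2)) (hG : G.rank = k)
    (hd : ∀ c ∈ LinearMap.range G.vecMulLinear, c ≠ 0 → 2 ≤ wt c) (S : Finset (Fin n))
    (hS : n < S.card + 2) : colRank G S = k := by
  have h1 := colRank_add G S
  suffices h : LinearMap.ker
      (G.submatrix id (Subtype.val : {x // x ∈ S} → Fin n)).vecMulLinear = ⊥ by
    rw [h, finrank_bot] at h1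
    exact h1
  rw [eq_bot_iff]
  intro u hu
  rw [mem_ker_iff] at hu
  by_contra hne
  have h2 : G.vecMulLinear u ≠ 0 := fun h => hne (vecMul_injective G hG (by rw [h, map_zero]))
  have := wt_add_card_le _ S hu
  have := hd _ ⟨u, rfl⟩ h2
  omega

/-- Omitting two columns lowers the rank by one exactly when their indicator is a codeword. -/
theorem colRank_pair {k n : ℕ} (G : Matrix (Fin k) (Fin n) (ZMod 2)) (hG : G.rank = k)
    (hd : ∀ c ∈ LinearMap.range G.vecMulLinear, c ≠ 0 → 2 ≤ wt c) (S : Finset (Fin n))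
    (hS : S.card + 2 = n) :
    colRank G S + (if coInd S ∈ LinearMap.range G.vecMulLinear then 1 else 0) = k := by
  have h1 := colRank_add G S
  have key : ∀ u ∈ LinearMap.ker
      (G.submatrix id (Subtype.val : {x // x ∈ S} → Fin n)).vecMulLinear, u ≠ 0 →
      G.vecMulLinear u = coInd S := by
    intro u hu hne
    rw [mem_ker_iff] at hu
    have h2 : G.vecMulLinear u ≠ 0 := fun h => hne (vecMul_injective G hG (by rw [h, map_zero]))
    have := hd _ ⟨u, rfl⟩ h2
    exact eq_coInd _ S hu (by omega)
  split_ifs with h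
  · obtain ⟨u, hu⟩ := h
    have hu0 : u ≠ 0 := by
      rintro rfl
      have := wt_coInd S
      rw [← hu, map_zero] at this
      simp [wt] at this
      omega
    have hk : LinearMap.ker
        (G.submatrix id (Subtype.val : {x // x ∈ S} → Fin n)).vecMulLinear
        = Submodule.span (ZMod 2) {u} := by
      apply le_antisymm
      · intro v hv
        by_cases hv0 : v = 0
        · rw [hv0]; exact zero_mem _
        · have : v = u := vecMul_injective G hG ((key v hv hv0).trans hu.symm)
          rw [this]; exact Submodule.mem_span_singleton_self u
      · rw [Submodule.span_singleton_le_iff_mem, mem_ker_iff, hu]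
        intro i hi
        simp [coInd, hi]
    rw [hk, finrank_span_singleton hu0] at h1
    exact h1
  · have hk : LinearMap.ker
        (G.submatrix id (Subtype.val : {x // x ∈ S} → Fin n)).vecMulLinear = ⊥ := by
      rw [eq_bot_iff]
      intro u hu
      by_contra hne
      exact h ⟨u, key u hu hne⟩
    rw [hk, finrank_bot] at h1
    exact h1

theorem card_filter_card {n : ℕ} (g : ℕ) :
    (Finset.univ.filter (fun S : Finset (Fin n) => S.card = g)).card = n.choose g := by
  have := Finset.card_powersetCard g (Finset.univ : Finset (Fin n))
  rw [Finset.card_univ, Fintype.card_fin] at this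
  rw [← this]
  congr 1
  ext S
  simp [Finset.mem_powersetCard]

theorem infoFun_eq_of_lt {k n : ℕ} (G : Matrix (Fin k) (Fin n) (ZMod 2)) (hG : G.rank = k)
    (hd : ∀ c ∈ LinearMap.range G.vecMulLinear, c ≠ 0 → 2 ≤ wt c) (g : ℕ)
    (hg : n < g + 2) : infoFun G g = n.choose g * k := by
  unfold infoFun
  rw [Finset.sum_congr rfl (g := fun _ => k), Finset.sum_const, card_filter_card, smul_eq_mul]
  intro S hS
  have := (Finset.mem_filter.1 hS).2
  exact colRank_eq_of_lt G hG hd S (by omega)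

theorem infoFun_pair {k n : ℕ} (G : Matrix (Fin k) (Fin n) (ZMod 2)) (hG : G.rank = k)
    (hd : ∀ c ∈ LinearMap.range G.vecMulLinear, c ≠ 0 → 2 ≤ wt c) (g : ℕ)
    (hg : g + 2 = n) :
    infoFun G g + (Finset.univ.filter (fun c : Fin n → ZMod 2 =>
          c ∈ LinearMap.range G.vecMulLinear ∧ wt c = 2)).card = n.choose g * k := by
  have hcard : (Finset.univ.filter (fun c : Fin n → ZMod 2 =>
        c ∈ LinearMap.range G.vecMulLinear ∧ wt c = 2)).card
      = ∑ S ∈ Finset.univ.filter (fun S : Finset (Fin n) => S.card = g),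
        (if coInd S ∈ LinearMap.range G.vecMulLinear then 1 else 0) := by
    rw [← Finset.card_filter, Finset.filter_filter]
    symm
    apply Finset.card_bij (fun S _ => coInd S)
    · intro S hS
      simp only [Finset.mem_filter, Finset.mem_univ, true_and] at hS ⊢
      refine ⟨hS.2, ?_⟩
      rw [wt_coInd]; omega
    · intro S _ T _ h
      ext i
      have := congrFun h i
      by_cases h1 : i ∈ S <;> by_cases h2 : i ∈ T <;> simp [coInd, h1, h2] at this ⊢
    · intro c hc
      simp only [Finset.mem_filter, Finset.mem_univ, true_and] at hc
      have hz : ∀ i ∈ Finset.univ.filter (fun i => c i = 0), c i = 0 :=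
        fun i hi => (Finset.mem_filter.1 hi).2
      have hsum : wt c + (Finset.univ.filter (fun i => c i = 0)).card = n := by
        have := Finset.card_filter_add_card_filter_not (s := Finset.univ) (fun i => c i = 0)
        rw [Finset.card_univ, Fintype.card_fin, add_comm] at this
        unfold wt
        convert this
      have hco := eq_coInd c _ hz (by omega)
      refine ⟨Finset.univ.filter (fun i => c i = 0), ?_, hco.symm⟩
      simp only [Finset.mem_filter, Finset.mem_univ, true_and]
      exact ⟨by omega, hco ▸ hc.1⟩
  rw [hcard, infoFun, ← Finset.sum_add_distrib, Finset.sum_congr rfl (g := fun _ => k),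
    Finset.sum_const, card_filter_card, smul_eq_mul]
  intro S hS
  have := (Finset.mem_filter.1 hS).2
  exact colRank_pair G hG hd S (by omega)

theorem two_le_length {k n : ℕ} (hk : 1 ≤ k) (G : Matrix (Fin k) (Fin n) (ZMod 2))
    (hG : G.rank = k) (hd : ∀ c ∈ LinearMap.range G.vecMulLinear, c ≠ 0 → 2 ≤ wt c) :
    2 ≤ n := by
  by_contra! hn
  -- With `n < 2`, no nonzero codeword can have weight two, so already the empty set of columns
  -- would have rank `k`.
  have h1 := colRank_eq_of_lt G hG hd ∅ (by simpa using hn)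
  have h2 : colRank G ∅ ≤ 0 := by
    have := (G.submatrix id (Subtype.val : {x // x ∈ (∅ : Finset (Fin n))} → Fin n)).rank_le_card_width
    simpa [colRank] using this
  omega

/-! ### The stability condition -/

theorem stmt9 (k nc : ℕ) (hk : 1 ≤ k) (n : Fin nc → ℕ)
    (C : ∀ h : Fin nc, Matrix (Fin k) (Fin (n h)) (ZMod 2))
    (hrank : ∀ h, (C h).rank = k)
    (hdmin : ∀ h, ∀ c ∈ LinearMap.range (C h).vecMulLinear, c ≠ 0 → 2 ≤ wt c)
    (P : Fin nc → ℝ) (hP : ∀ h, 0 ≤ P h) (hPsum : ∑ h, P h = 1)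
    (a : Fin nc → ℕ → ℝ)
    (ha : ∀ h t, a h t
      = ((n h - t : ℕ) : ℝ) * (infoFun (C h) (n h - t) : ℝ)
        - ((t + 1 : ℕ) : ℝ) * (infoFun (C h) (n h - 1 - t) : ℝ))
    (f : ℝ → ℝ → ℝ)
    (hf : ∀ x G, f x G
      = 1 - Real.exp (-(G / k) * ∑ h, P h *
          ∑ t ∈ Finset.range (n h), a h t * x ^ t * (1 - x) ^ (n h - 1 - t)))
    (A2bar : ℝ)
    (hA2 : A2bar = ∑ h, P h *
        ((Finset.univ.filter (fun c : Fin (n h) → ZMod 2 =>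
          c ∈ LinearMap.range (C h).vecMulLinear ∧ wt c = 2)).card : ℝ)) :
    (∀ G : ℝ, f 0 G = 0) ∧
    (0 < A2bar → ∀ G : ℝ, 0 < G → G < k / (2 * A2bar) →
      ∃ ε > 0, ∀ x₀ : ℝ, |x₀| < ε →
        Tendsto (fun l : ℕ => (fun x => f x G)^[l] x₀) atTop (nhds 0)) ∧
    (0 < A2bar → ∀ G : ℝ, k / (2 * A2bar) < G →
      ∃ ε > 0, ∀ δ > 0, ∃ x₀ : ℝ, 0 < |x₀| ∧ |x₀| < δ ∧
        ∃ l : ℕ, ε ≤ |(fun x => f x G)^[l] x₀|) ∧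
    (A2bar = 0 → ∀ G : ℝ, 0 < G →
      ∃ ε > 0, ∀ x₀ : ℝ, |x₀| < ε →
        Tendsto (fun l : ℕ => (fun x => f x G)^[l] x₀) atTop (nhds 0)) := by
  have hn : ∀ h, 2 ≤ n h := fun h => two_le_length hk (C h) (hrank h) (hdmin h)
  have ha0 : ∀ h, a h 0 = 0 := by
    intro h
    have h2 := hn h
    rw [ha, infoFun_eq_of_lt _ (hrank h) (hdmin h) _ (by omega),
      infoFun_eq_of_lt _ (hrank h) (hdmin h) _ (by omega)]
    have e : (n h).choose (n h - 1 - 0) = n h := by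
      rw [Nat.sub_zero, Nat.choose_symm (by omega : 1 ≤ n h), Nat.choose_one_right]
    rw [e, Nat.sub_zero, Nat.choose_self]
    push_cast
    ring
  have ha1 : ∀ h, a h 1 = 2 * ((Finset.univ.filter (fun c : Fin (n h) → ZMod 2 =>
          c ∈ LinearMap.range (C h).vecMulLinear ∧ wt c = 2)).card : ℝ) := by
    intro h
    have h2 := hn h
    have hp := infoFun_pair _ (hrank h) (hdmin h) (n h - 1 - 1) (by omega)
    have e1 : (n h).choose (n h - 1) = n h := by
      rw [Nat.choose_symm (by omega : 1 ≤ n h), Nat.choose_one_right]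
    have e2 : (n h).choose (n h - 1 - 1) = (n h).choose 2 := by
      rw [← Nat.choose_symm h2, Nat.sub_sub]
    rw [e2] at hp
    have hp' := congrArg (Nat.cast : ℕ → ℝ) hp
    push_cast [Nat.cast_choose_two] at hp'
    rw [ha, infoFun_eq_of_lt _ (hrank h) (hdmin h) _ (by omega), e1]
    push_cast [Nat.cast_sub (by omega : 1 ≤ n h)]
    linear_combination -2 * hp'
  have hf0 : ∀ G, f 0 G = 0 := by
    intro G
    have hz : ∀ h, ∑ t ∈ Finset.range (n h), a h t * (0 : ℝ) ^ t * (1 - 0) ^ (n h - 1 - t) = 0 := by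
      intro h
      apply Finset.sum_eq_zero
      intro t _
      rcases t with _ | t
      · simp [ha0]
      · simp
    rw [hf]
    simp only [hz, mul_zero, Finset.sum_const_zero, Real.exp_zero, sub_self]
  have hder : ∀ G, HasDerivAt (fun x => f x G) (G / k * (2 * A2bar)) 0 := by
    intro G
    have h1 : HasDerivAt (fun x : ℝ => ∑ h, P h *
          ∑ t ∈ Finset.range (n h), a h t * x ^ t * (1 - x) ^ (n h - 1 - t)) (2 * A2bar) 0 := by
      refine (HasDerivAt.fun_sum (u := Finset.univ) (fun h _ =>
        (hasDerivAt_bernstein (a h) (n h) (hn h) (ha0 h)).const_mul (P h))).congr_deriv ?_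
      rw [hA2, Finset.mul_sum]
      refine Finset.sum_congr rfl fun h _ => ?_
      rw [ha1]
      ring
    have h2 := ((h1.const_mul (-(G / k))).exp).const_sub 1
    have hfun : (fun x => f x G) = fun x => 1 - Real.exp (-(G / k) * ∑ h, P h *
          ∑ t ∈ Finset.range (n h), a h t * x ^ t * (1 - x) ^ (n h - 1 - t)) :=
      funext fun x => hf x G
    rw [hfun]
    refine h2.congr_deriv ?_
    -- The exponential factor equals `1 - f 0 G = 1`.
    have h3 := hf 0 G
    rw [hf0] at h3
    rw [← sub_eq_zero.1 h3.symm]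
    ring
  have hk' : (0 : ℝ) < k := by exact_mod_cast hk
  refine ⟨hf0, fun hA G hG hlt => ?_, fun hA G hlt => ?_, fun hA G hG => ?_⟩
  · refine stable_of_hasDerivAt _ _ (hf0 G) (hder G) ?_
    rw [abs_of_nonneg (by positivity), div_mul_eq_mul_div, div_lt_one hk']
    exact (lt_div_iff₀ (by positivity)).1 hlt
  · refine unstable_of_hasDerivAt _ _ (hf0 G) (hder G) ?_
    rw [div_mul_eq_mul_div, one_lt_div hk']
    exact (div_lt_iff₀ (by positivity)).1 hlt
  · refine stable_of_hasDerivAt _ _ (hf0 G) (hder G) ?_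
    simp [hA]
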